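/- arXiv:2505.17523 — 2 statements merged into one kernel-verified Lean document; each statement's English description precedes it below -/
import Mathlib

section
/- Let T ⊆ 𝔹 and let 𝔹_𝔭 be an orbit with 𝔹_𝔭 − T̃_𝔭 ≠ ∅. Then e_β ∈ 𝒟′_T for every β ∈ 𝔹_𝔭 − T̃_𝔭, and −e_β ∈ 𝒟′_T for every β ∈ T̃_𝔭 − T_𝔭. -/
/- Setting: `B` is the finite nonempty set 𝔹 equipped with a permutation `σ` (Frobenius),
and `p` is a prime.  Weights live in `ℚ^𝔹 = (B → ℚ)`.  The orbits `𝔹_𝔭` of `σ` are the sets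
`orbit σ β`, and for `T ⊆ 𝔹` we have `T_𝔭 = T ∩ orbit σ β`. -/

open scoped Classical

noncomputable section

namespace GO

variable {B : Type*} [Fintype B] [DecidableEq B]

/-- The standard basis vector `e_β` of `ℚ^𝔹`. -/
def e (β : B) : B → ℚ := fun τ => if τ = β then 1 else 0

/-- `β'` lies in the `σ`-orbit of `β`. -/
def sameOrbit (σ : Equiv.Perm B) (β β' : B) : Prop := ∃ n : ℕ, (σ ^ n) β = β'

/-- The `σ`-orbit `𝔹_𝔭` of `β`. -/
def orbit (σ : Equiv.Perm B) (β : B) : Set B := {τ | sameOrbit σ β τ}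

/-- `|𝔹_𝔭|`, the cardinality of the orbit of `β`. -/
def orbitCard (σ : Equiv.Perm B) (β : B) : ℕ := (orbit σ β).ncard

/-- For `β`, `β'` in the same orbit: the unique `n` with `0 < n ≤ |𝔹_𝔭|` and `σ^n β' = β`,
realized as the least positive `n` with `σ^n β' = β`. -/
def steps (σ : Equiv.Perm B) (β' β : B) : ℕ := sInf {n : ℕ | 0 < n ∧ (σ ^ n) β' = β}

/-- For `β`, `β'` in the same orbit: the unique `n` with `0 ≤ n < |𝔹_𝔭|` and `σ^n β = β'`. -/
def steps0 (σ : Equiv.Perm B) (β β' : B) : ℕ := sInf {n : ℕ | (σ ^ n) β = β'}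

/-- `h_β^{β'} = -e_β + p^n e_{β'}` where `β = σ^n β'` with `0 < n ≤ |𝔹_𝔭|`. -/
def hvec (σ : Equiv.Perm B) (p : ℕ) (β β' : B) : B → ℚ :=
  -(e β) + ((p : ℚ) ^ steps σ β' β) • e β'

/-- `b_β^{β'} = e_β + p^n e_{β'}` where `β = σ^n β'` with `0 < n ≤ |𝔹_𝔭|`. -/
def bvec (σ : Equiv.Perm B) (p : ℕ) (β β' : B) : B → ℚ :=
  (e β) + ((p : ℚ) ^ steps σ β' β) • e β'

/-- `h_β = -e_β + p e_{σ⁻¹ β}`. -/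
def hsimple (σ : Equiv.Perm B) (p : ℕ) (β : B) : B → ℚ := -(e β) + (p : ℚ) • e (σ⁻¹ β)

/-- `b_β = e_β + p e_{σ⁻¹ β}`. -/
def bsimple (σ : Equiv.Perm B) (p : ℕ) (β : B) : B → ℚ := (e β) + (p : ℚ) • e (σ⁻¹ β)

/-- The `ℚ^{≥0}`-cone generated by a set `S` of vectors: all finite nonnegative rational
linear combinations of elements of `S`. -/
def cone {V : Type*} [AddCommMonoid V] [Module ℚ V] (S : Set V) : Set V :=
  {x | ∃ (n : ℕ) (c : Fin n → ℚ) (v : Fin n → V),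
    (∀ i, 0 ≤ c i) ∧ (∀ i, v i ∈ S) ∧ x = ∑ i, c i • v i}

/-- A chain in `T` (automatically contained in a single orbit, so this is the notion of a
chain in `T_𝔭` for `T_𝔭 ⊊ 𝔹_𝔭`): `C = {σ^{-i}β : 0 ≤ i ≤ m} ⊆ T` with `σβ ∉ T` and
`σ^{-m-1}β ∉ T`. -/
def IsChainIn (σ : Equiv.Perm B) (T : Set B) (C : Set B) : Prop :=
  ∃ (β : B) (m : ℕ), σ β ∉ T ∧ (σ⁻¹ ^ (m + 1)) β ∉ T ∧
    (∀ i ≤ m, (σ⁻¹ ^ i) β ∈ T) ∧ C = {τ | ∃ i ≤ m, τ = (σ⁻¹ ^ i) β}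

/-- `C̃` for a chain `C`: equals `C` if `m` is odd (i.e. `|C| = m+1` is even), and
`C ∪ {σ^{-m-1}β} = C ∪ σ⁻¹(C)` if `m` is even (i.e. `|C|` odd). -/
def chainExt (σ : Equiv.Perm B) (C : Set B) : Set B :=
  if Odd C.ncard then C ∪ (⇑σ⁻¹ '' C) else C

/-- `T̃ = ⋃_𝔭 T̃_𝔭`: the union of `T` with the extensions `C̃` of all chains `C` in `T`.
(For orbits with `T_𝔭 = 𝔹_𝔭` there are no chains and `T̃_𝔭 = 𝔹_𝔭 = T_𝔭`.) -/
def tilde (σ : Equiv.Perm B) (T : Set B) : Set B :=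
  T ∪ ⋃ (C : Set B) (_ : IsChainIn σ T C), chainExt σ C

/-- `μ_β`: the least `i > 0` with `σ^i β ∉ T` if `T_𝔭 ≠ 𝔹_𝔭`, and `0` if `T_𝔭 = 𝔹_𝔭`. -/
def mu (σ : Equiv.Perm B) (T : Set B) (β : B) : ℕ :=
  if orbit σ β ⊆ T then 0 else sInf {i : ℕ | 0 < i ∧ (σ ^ i) β ∉ T}

/-- `n_β`: the least `i > 0` with `σ^i β ∉ T̃` (meaningful when `T̃_𝔭 ≠ 𝔹_𝔭`). -/
def nn (σ : Equiv.Perm B) (T : Set B) (β : B) : ℕ :=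
  sInf {i : ℕ | 0 < i ∧ (σ ^ i) β ∉ tilde σ T}

/-- `ν_β`: the least `i ≥ 0` with `σ^{-i} β ∉ T` (meaningful when `T_𝔭 ≠ 𝔹_𝔭`). -/
def nu (σ : Equiv.Perm B) (T : Set B) (β : B) : ℕ :=
  sInf {i : ℕ | (σ⁻¹ ^ i) β ∉ T}

/-- `𝒯(T_𝔭) = (𝔹_𝔭 − T̃_𝔭) ∪ σ(T̃_𝔭 − T_𝔭)`, taken globally (union over all `𝔭`). -/
def Tscr (σ : Equiv.Perm B) (T : Set B) : Set B :=
  (tilde σ T)ᶜ ∪ (⇑σ '' (tilde σ T \ T))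

/-- The generating set `⋃_𝔭 𝒢(T_𝔭)`:
`{h_β^{β'} : β ∈ ℋ(T_𝔭), β' ∈ 𝒯(T_𝔭)} ∪ {±b_β : β ∈ T_𝔭}` over all `𝔭`. -/
def Dgen (σ : Equiv.Perm B) (p : ℕ) (T : Set B) : Set (B → ℚ) :=
  {v | ∃ β β', β ∉ T ∧ β' ∈ Tscr σ T ∧ sameOrbit σ β β' ∧ v = hvec σ p β β'}
  ∪ {v | ∃ β ∈ T, v = bsimple σ p β ∨ v = -(bsimple σ p β)}

/-- The cone `𝒟_T`. -/
def D (σ : Equiv.Perm B) (p : ℕ) (T : Set B) : Set (B → ℚ) := cone (Dgen σ p T)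

/-- `h_{σ^{n_β}β}^{β} = -e_{σ^{n_β}β} + p^{n_β} e_β`. -/
def fH (σ : Equiv.Perm B) (p : ℕ) (T : Set B) (β : B) : B → ℚ :=
  -(e ((σ ^ nn σ T β) β)) + ((p : ℚ) ^ nn σ T β) • e β

/-- `b_{σ^{n_β}β}^{β} = e_{σ^{n_β}β} + p^{n_β} e_β`. -/
def fB (σ : Equiv.Perm B) (p : ℕ) (T : Set B) (β : B) : B → ℚ :=
  (e ((σ ^ nn σ T β) β)) + ((p : ℚ) ^ nn σ T β) • e β

/-- The generating set `⋃_𝔭 𝒢′(T_𝔭)`: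
if `𝔹_𝔭 − T̃_𝔭 ≠ ∅` it is `{h_{σ^{n_β}β}^β : β ∈ 𝔹_𝔭 − T̃_𝔭} ∪ {−b_{σ^{n_β}β}^β : β ∈ T̃_𝔭 − T_𝔭}
∪ {±b_β : β ∈ T_𝔭}`, and if `𝔹_𝔭 = T̃_𝔭` it is `{−e_β : β ∈ 𝔹_𝔭 − T_𝔭} ∪ {±b_β : β ∈ T_𝔭}`. -/
def D'gen (σ : Equiv.Perm B) (p : ℕ) (T : Set B) : Set (B → ℚ) :=
  {v | ∃ β, β ∉ tilde σ T ∧ v = fH σ p T β}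
  ∪ {v | ∃ β, β ∈ tilde σ T ∧ β ∉ T ∧ ¬ orbit σ β ⊆ tilde σ T ∧ v = -(fB σ p T β)}
  ∪ {v | ∃ β, β ∉ T ∧ orbit σ β ⊆ tilde σ T ∧ v = -(e β)}
  ∪ {v | ∃ β ∈ T, v = bsimple σ p β ∨ v = -(bsimple σ p β)}

/-- The cone `𝒟′_T`. -/
def D' (σ : Equiv.Perm B) (p : ℕ) (T : Set B) : Set (B → ℚ) := cone (D'gen σ p T)

/-- `f_β(T)` for `β ∉ T`: `h_{σ^{n_β}β}^β` if `β ∈ 𝔹_𝔭 − T̃_𝔭`; `−b_{σ^{n_β}β}^β` if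
`β ∈ T̃_𝔭 − T_𝔭` and `𝔹_𝔭 ≠ T̃_𝔭`; and `−(1+p^{|𝔹_𝔭|}) e_β` if `𝔹_𝔭 = T̃_𝔭`. -/
def fvec (σ : Equiv.Perm B) (p : ℕ) (T : Set B) (β : B) : B → ℚ :=
  if orbit σ β ⊆ tilde σ T then -((1 + (p : ℚ) ^ orbitCard σ β) • e β)
  else if β ∈ tilde σ T then -(fB σ p T β) else fH σ p T β

/-- `𝔹(T) = ⋃_𝔭 𝔹_𝔭(T)`: `β ∈ 𝔹(T)` iff `β ∉ T`, the set `𝔹_𝔭 − T̃_𝔭` is nonempty, and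
`𝔹_𝔭 − T̃_𝔭 ≠ {β}` (this encodes all three cases of the definition of `𝔹_𝔭(T)`). -/
def BT (σ : Equiv.Perm B) (T : Set B) : Set B :=
  {β | β ∉ T ∧ (orbit σ β \ tilde σ T).Nonempty ∧ orbit σ β \ tilde σ T ≠ {β}}

/-- The sign function `ε_T : 𝔹 → {−1,0,1}`. -/
def epsT (σ : Equiv.Perm B) (T : Set B) (β : B) : ℚ :=
  if orbit σ β ⊆ T then 0
  else if β ∈ tilde σ T then (-1 : ℚ) ^ (mu σ T β - 1) else 1

/-- `L^ε[β, β'](κ) = Σ_{0 ≤ i ≤ n} ε(σ^iβ) p^i k_{σ^iβ}`, where `β' = σ^n β` with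
`0 ≤ n < |𝔹_𝔭|`. -/
def Lfun (σ : Equiv.Perm B) (p : ℕ) (ε : B → ℚ) (β β' : B) (κ : B → ℚ) : ℚ :=
  ∑ i ∈ Finset.range (steps0 σ β β' + 1), ε ((σ ^ i) β) * (p : ℚ) ^ i * κ ((σ ^ i) β)

/-- `L^ε[β] = L^ε[β, σ⁻¹β]`. -/
def Lfun1 (σ : Equiv.Perm B) (p : ℕ) (ε : B → ℚ) (β : B) (κ : B → ℚ) : ℚ :=
  Lfun σ p ε β (σ⁻¹ β) κ

/-- `L_{T,β}` for `β ∈ 𝔹 − T`: `L^{ε_T}[σ^{μ_β}β]` if `β ∈ 𝔹 − T̃`, and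
`L^{ε_T}[β, σ^{μ_β−1}β]` if `β ∈ T̃ − T`. -/
def LT (σ : Equiv.Perm B) (p : ℕ) (T : Set B) (β : B) (κ : B → ℚ) : ℚ :=
  if β ∈ tilde σ T then Lfun σ p (epsT σ T) β ((σ ^ (mu σ T β - 1)) β) κ
  else Lfun1 σ p (epsT σ T) ((σ ^ mu σ T β) β) κ

/-- `ε_{T,f_β}`: negates `ε_T` on `{β, σβ, …, σ^{μ_β−1}β}`. -/
def epsTf (σ : Equiv.Perm B) (T : Set B) (β τ : B) : ℚ :=
  if ∃ i < mu σ T β, τ = (σ ^ i) β then -(epsT σ T τ) else epsT σ T τ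

/-- `L_{T,f_β,τ}` for `β ∈ 𝔹(T)` and `τ ∈ 𝔹 − (T ∪ {σ^{n_β}β})`, with `β′ = σ^{n_β}β` and
`β̃ = σ^{μ_{β′}}β′`. -/
def LTf (σ : Equiv.Perm B) (p : ℕ) (T : Set B) (β τ : B) (κ : B → ℚ) : ℚ :=
  if τ = β then
    (if β ∈ tilde σ T then
      Lfun1 σ p (epsTf σ T β) ((σ ^ mu σ T ((σ ^ nn σ T β) β)) ((σ ^ nn σ T β) β)) κ
    else
      Lfun σ p (epsTf σ T β) β (σ⁻¹ ((σ ^ mu σ T ((σ ^ nn σ T β) β)) ((σ ^ nn σ T β) β))) κ)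
  else
    (if τ ∈ tilde σ T then LT σ p T τ κ
     else Lfun1 σ p (epsTf σ T β) ((σ ^ mu σ T τ) τ) κ)

/-- `𝒟_{T,f_β} = {κ : L_{T,f_β,τ}(κ) ≥ 0 for all τ ∈ 𝔹 − (T ∪ {σ^{n_β}β})}`. -/
def Df (σ : Equiv.Perm B) (p : ℕ) (T : Set B) (β : B) : Set (B → ℚ) :=
  {κ | ∀ τ, τ ∉ T → τ ≠ (σ ^ nn σ T β) β → 0 ≤ LTf σ p T β τ κ}

/-- `i_T : ℚ^𝔹 → ℚ^{𝔹−T}`, the linear map with `i_T(e_β) = 0` if `T_𝔭 = 𝔹_𝔭` and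
`i_T(e_β) = (−p)^{ν_β} e_{σ^{−ν_β}β}` otherwise. -/
def iT (σ : Equiv.Perm B) (p : ℕ) (T : Set B) (κ : B → ℚ) : {β : B // β ∉ T} → ℚ :=
  fun β₀ => ∑ β : B, κ β *
    (if orbit σ β ⊆ T then 0
     else if (σ⁻¹ ^ nu σ T β) β = β₀.1 then (-(p : ℚ)) ^ nu σ T β else 0)

/-- Restriction to `ℚ^{𝔹−T}` of a vector of `ℚ^𝔹` (used for vectors supported on `𝔹 − T`). -/
def res (T : Set B) (v : B → ℚ) : {β : B // β ∉ T} → ℚ := fun β => v β.1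

/-- The generating set `𝒢^{T-red}(T) = ⋃_𝔭 𝒢_𝔭^{T-red}(T)` of the reduced cone. -/
def Gred (σ : Equiv.Perm B) (p : ℕ) (T : Set B) : Set ({β : B // β ∉ T} → ℚ) :=
  {v | ∃ β, β ∉ tilde σ T ∧ v = res T (fH σ p T β)}
  ∪ {v | ∃ β, β ∈ tilde σ T ∧ β ∉ T ∧ ¬ orbit σ β ⊆ tilde σ T ∧ v = res T (-(fB σ p T β))}
  ∪ {v | ∃ β, β ∉ T ∧ orbit σ β ⊆ tilde σ T ∧ v = res T (-(e β))}

/-- The minimal cone `𝒞^min_T = i_T(𝒟_T ∩ ⋂_{β ∈ 𝔹(T)} 𝒟_{T,f_β}) ⊆ ℚ^{𝔹−T}`. -/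
def Cmin (σ : Equiv.Perm B) (p : ℕ) (T : Set B) : Set ({β : B // β ∉ T} → ℚ) :=
  iT σ p T '' (D σ p T ∩ {κ | ∀ β ∈ BT σ T, κ ∈ Df σ p T β})

/-- `g_β`: `b_β` if `β ∈ T_𝔭`; `−e_β` if `β ∈ T̃_𝔭 − T_𝔭` and `𝔹_𝔭 = T̃_𝔭`;
`−b_{σ^{n_β}β}^β` if `β ∈ T̃_𝔭 − T_𝔭` and `𝔹_𝔭 ≠ T̃_𝔭`; `h_{σ^{n_β}β}^β` if `β ∈ 𝔹_𝔭 − T̃_𝔭`. -/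
def gvec (σ : Equiv.Perm B) (p : ℕ) (T : Set B) (β : B) : B → ℚ :=
  if β ∈ T then bsimple σ p β
  else if orbit σ β ⊆ tilde σ T then -(e β)
  else if β ∈ tilde σ T then -(fB σ p T β)
  else fH σ p T β

/-- The map `σ̄ : β ↦ σ^{n_β} β`. -/
def sigbar (σ : Equiv.Perm B) (T : Set B) (β : B) : B := (σ ^ nn σ T β) β

/-- `h_β = -e_β + p e_{σ⁻¹β}` as an element of `ℤ^𝔹`. -/
def hZ (σ : Equiv.Perm B) (p : ℕ) (β : B) : B → ℤ :=
  fun τ => (if τ = β then -1 else 0) + (if τ = σ⁻¹ β then (p : ℤ) else 0)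

end GO

end

/-!
The generators `h_{σ^{n_τ}τ}^τ` run from each point `τ` of `𝔹_𝔭 − T̃_𝔭` to the next one, so for
`β ∈ 𝔹_𝔭 − T̃_𝔭` a suitable nonnegative combination telescopes along the orbit. Going once around,
through `N` steps of `σ`, leaves `(p^N - 1) e_β`, and `p^N - 1 > 0`. For `β ∈ T̃ − T` the point
`σ^{n_β}β` lies outside `T̃`, so adding its basis vector to `-b_{σ^{n_β}β}^β` leaves `-p^{n_β} e_β`.
-/

namespace GO

open Function (periodicPts)

section PointedCone

variable {R V : Type*}

theorem cone_eq_hull [AddCommMonoid V] [Module ℚ V] (S : Set V) :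
    cone S = (PointedCone.hull ℚ S : Set V) := by
  ext x
  rw [SetLike.mem_coe, PointedCone.hull, Submodule.mem_span_set']
  constructor
  · rintro ⟨n, c, v, hc, hv, rfl⟩
    exact ⟨n, fun i => ⟨c i, hc i⟩, fun i => ⟨v i, hv i⟩, rfl⟩
  · rintro ⟨n, c, v, rfl⟩
    exact ⟨n, fun i => c i, fun i => v i, fun i => (c i).2, fun i => (v i).2, rfl⟩

theorem mul_smul_sub_mem_of_smul_sub_mem [Ring R] [PartialOrder R] [IsOrderedRing R]
    [AddCommGroup V] [Module R V] {C : PointedCone R V} {a b : R} {x y z : V} (ha : 0 ≤ a)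
    (hyz : a • y - z ∈ C) (hxy : b • x - y ∈ C) : (a * b) • x - z ∈ C := by
  have telescope : (a * b) • x - z = a • (b • x - y) + (a • y - z) := by
    rw [smul_sub, smul_smul, sub_add_sub_cancel]
  rw [telescope]
  exact C.add_mem (C.smul_mem ha hxy) hyz

end PointedCone

section FirstReturn

variable {B : Type*} {σ : Equiv.Perm B} {T : Set B} {β : B} {m : ℕ}

theorem nn_pos (hm : 0 < m) (hmT : (σ ^ m) β ∉ tilde σ T) : 0 < nn σ T β :=
  (Nat.sInf_mem (s := {i | 0 < i ∧ (σ ^ i) β ∉ tilde σ T}) ⟨m, hm, hmT⟩).1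

theorem pow_nn_apply_notMem_tilde (hm : 0 < m) (hmT : (σ ^ m) β ∉ tilde σ T) :
    (σ ^ nn σ T β) β ∉ tilde σ T :=
  (Nat.sInf_mem (s := {i | 0 < i ∧ (σ ^ i) β ∉ tilde σ T}) ⟨m, hm, hmT⟩).2

theorem nn_le (hm : 0 < m) (hmT : (σ ^ m) β ∉ tilde σ T) : nn σ T β ≤ m :=
  Nat.sInf_le ⟨hm, hmT⟩

end FirstReturn

variable {B : Type*} [DecidableEq B] {σ : Equiv.Perm B} {p : ℕ} {T : Set B} {β : B}

/-- The cone `𝒟′_T` as a bundled `PointedCone`, which gives access to the closure properties of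
submodules over the nonnegative rationals. -/
def D'Cone (σ : Equiv.Perm B) (p : ℕ) (T : Set B) : PointedCone ℚ (B → ℚ) :=
  PointedCone.hull ℚ (D'gen σ p T)

theorem coe_D'Cone (σ : Equiv.Perm B) (p : ℕ) (T : Set B) :
    (D'Cone σ p T : Set (B → ℚ)) = D' σ p T :=
  (cone_eq_hull _).symm

theorem fH_mem_D'Cone (hβ : β ∉ tilde σ T) : fH σ p T β ∈ D'Cone σ p T :=
  PointedCone.subset_hull (Or.inl (Or.inl (Or.inl ⟨β, hβ, rfl⟩)))

theorem neg_fB_mem_D'Cone (hβ : β ∈ tilde σ T \ T) (horb : ¬ orbit σ β ⊆ tilde σ T) :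
    -fB σ p T β ∈ D'Cone σ p T :=
  PointedCone.subset_hull (Or.inl (Or.inl (Or.inr ⟨β, hβ.1, hβ.2, horb, rfl⟩)))

theorem pow_smul_e_sub_e_mem_D'Cone {m : ℕ} (hβ : β ∉ tilde σ T)
    (hmT : (σ ^ m) β ∉ tilde σ T) :
    (p : ℚ) ^ m • e β - e ((σ ^ m) β) ∈ D'Cone σ p T := by
  induction m using Nat.strong_induction_on generalizing β with
  | _ m ih =>
    rcases m.eq_zero_or_pos with rfl | hm
    · simp
    obtain ⟨k, hk⟩ := Nat.exists_eq_add_of_le' (nn_le hm hmT)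
    have first_return : (p : ℚ) ^ nn σ T β • e β - e ((σ ^ nn σ T β) β) ∈ D'Cone σ p T := by
      simpa only [fH, neg_add_eq_sub] using fH_mem_D'Cone (p := p) hβ
    have pow_split : (σ ^ m) β = (σ ^ k) ((σ ^ nn σ T β) β) := by
      conv_lhs => rw [hk, pow_add, Equiv.Perm.mul_apply]
    have rest : (p : ℚ) ^ k • e ((σ ^ nn σ T β) β) - e ((σ ^ m) β) ∈ D'Cone σ p T := by
      have hkm : k < m := by have := nn_pos hm hmT; omega
      rw [pow_split] at hmT ⊢
      exact ih k hkm (pow_nn_apply_notMem_tilde hm (pow_split ▸ hmT)) hmT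
    have hpow : (p : ℚ) ^ m = p ^ k * p ^ nn σ T β := by rw [← pow_add, ← hk]
    rw [hpow]
    exact mul_smul_sub_mem_of_smul_sub_mem (by positivity) rest first_return

theorem e_mem_D'Cone (hp : 1 < p) (hper : β ∈ periodicPts σ) (hβ : β ∉ tilde σ T) :
    e β ∈ D'Cone σ p T := by
  obtain ⟨N, hN, hNβ⟩ := hper
  have return_eq : (σ ^ N) β = β := hNβ
  have around : ((p : ℚ) ^ N - 1) • e β ∈ D'Cone σ p T := by
    simpa only [return_eq, sub_smul, one_smul] using
      pow_smul_e_sub_e_mem_D'Cone (p := p) (m := N) hβ (return_eq.symm ▸ hβ)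
  have hpos : (0 : ℚ) < p ^ N - 1 :=
    sub_pos.2 (one_lt_pow₀ (Nat.one_lt_cast.2 hp) hN.ne')
  exact ((D'Cone σ p T).smul_mem_iff hpos).1 around

theorem neg_e_mem_D'Cone (hp : 1 < p) (hper : β ∈ periodicPts σ) (hβ : β ∈ tilde σ T \ T)
    (horb : ¬ orbit σ β ⊆ tilde σ T) : -e β ∈ D'Cone σ p T := by
  obtain ⟨_, ⟨m, rfl⟩, hmT⟩ := Set.not_subset.1 horb
  have hm : 0 < m := Nat.pos_of_ne_zero fun h => hmT (by simpa [h] using hβ.1)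
  have hper' : (σ ^ nn σ T β) β ∈ periodicPts σ :=
    (Function.bijOn_periodicPts σ).mapsTo.iterate _ hper
  have sum_mem := (D'Cone σ p T).add_mem
    (e_mem_D'Cone hp hper' (pow_nn_apply_notMem_tilde hm hmT)) (neg_fB_mem_D'Cone hβ horb)
  rw [fB, neg_add, add_neg_cancel_left, ← smul_neg] at sum_mem
  have hpos : (0 : ℚ) < p ^ nn σ T β := pow_pos (Nat.cast_pos.2 (by omega)) _
  exact ((D'Cone σ p T).smul_mem_iff hpos).1 sum_mem

end GO

theorem statement14_general {B : Type*} [DecidableEq B] (σ : Equiv.Perm B) (p : ℕ) (hp : 1 < p)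
    (T : Set B) (β : B) (hper : β ∈ Function.periodicPts σ)
    (horb : ∃ τ ∈ GO.orbit σ β, τ ∉ GO.tilde σ T) :
    (β ∉ GO.tilde σ T → GO.e β ∈ GO.D' σ p T) ∧
    (β ∈ GO.tilde σ T \ T → -(GO.e β) ∈ GO.D' σ p T) := by
  rw [← GO.coe_D'Cone]
  exact ⟨GO.e_mem_D'Cone hp hper,
    fun hβ => GO.neg_e_mem_D'Cone hp hper hβ (Set.not_subset.2 horb)⟩

/-- let `𝔹_𝔭` be an orbit with `𝔹_𝔭 − T̃_𝔭 ≠ ∅`.  Then `e_β ∈ 𝒟′_T` for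
every `β ∈ 𝔹_𝔭 − T̃_𝔭`, and `−e_β ∈ 𝒟′_T` for every `β ∈ T̃_𝔭 − T_𝔭`. -/
theorem statement14 {B : Type*} [Fintype B] [DecidableEq B] [Nonempty B]
    (σ : Equiv.Perm B) (p : ℕ) (hp : p.Prime) (T : Set B) (β : B)
    (horb : ∃ τ ∈ GO.orbit σ β, τ ∉ GO.tilde σ T) :
    (β ∉ GO.tilde σ T → GO.e β ∈ GO.D' σ p T) ∧
    (β ∈ GO.tilde σ T \ T → -(GO.e β) ∈ GO.D' σ p T) :=
  statement14_general σ p hp.one_lt T β (σ.injective.mem_periodicPts β) horb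
end

section
/- Let T ⊆ 𝔹 and β ∈ 𝔹(T), and suppose {σ^iβ : 0 < i < n_β} ∩ (T̃ − T) = ∅. Set T⁺ = T ∪ {σ^{n_β}β}. Then L_{T,f_β,τ} = L_{T⁺,τ} for every τ ∈ 𝔹 − T⁺ (where L_{T⁺,τ} is defined from T⁺ as L_{T,τ} is from T), and consequently 𝒟_{T,f_β} = 𝒟_{T⁺}. -/
/- Setting: `B` is the finite nonempty set 𝔹 equipped with a permutation `σ` (Frobenius),
and `p` is a prime.  Weights live in `ℚ^𝔹 = (B → ℚ)`.  The orbits `𝔹_𝔭` of `σ` are the sets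
`orbit σ β`, and for `T ⊆ 𝔹` we have `T_𝔭 = T ∩ orbit σ β`. -/

open scoped Classical

/-!
For `τ ∉ T`, call `τ, στ, …, σ^{μ_τ - 1}τ` the run of `τ` and `σ^{μ_τ}τ` its exit point. Then
`τ ∈ T̃` exactly when `μ_τ` is even, and `ε_T = -(-1)^μ` on every orbit not contained in `T`.

The hypotheses on `β` say that its exit point is `σ^{n_β}β`, that this is not `β` itself, and that
the run of the exit point has odd length. Adjoining the exit point to `T` prolongs the run of `β` by
that odd length and leaves all other runs alone, so the sign changes exactly on the run of `β`:
`ε_{T,f_β} = ε_{T⁺}`, and the functionals agree one by one.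

To pass to the cones, the vectors `g_β` form a basis of `ℚ^𝔹`, they lie in `𝒟_T` (together with
`-g_β` when `β ∈ T`), and `L_{T,τ}(g_β)` vanishes for `β ≠ τ` and is positive for `β = τ`. As the
`L_{T,τ}` are nonnegative on the generators of `𝒟_T`, they cut out `𝒟_T`.
-/

namespace GO

section Orbits

variable {B : Type*} {σ : Equiv.Perm B} {a b c : B}

lemma pow_apply_pow_apply (σ : Equiv.Perm B) (i j : ℕ) (a : B) :
    (σ ^ i) ((σ ^ j) a) = (σ ^ (i + j)) a := by
  rw [pow_add, Equiv.Perm.mul_apply]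

lemma apply_pow_apply (σ : Equiv.Perm B) (i : ℕ) (a : B) :
    σ ((σ ^ i) a) = (σ ^ (i + 1)) a := by
  rw [pow_succ', Equiv.Perm.mul_apply]

lemma pow_apply_apply (σ : Equiv.Perm B) (i : ℕ) (a : B) :
    (σ ^ i) (σ a) = (σ ^ (i + 1)) a := by
  rw [pow_succ, Equiv.Perm.mul_apply]

lemma eq_pow_sub_apply {i j : ℕ} (hij : i ≤ j) (h : (σ ^ i) a = (σ ^ j) b) :
    a = (σ ^ (j - i)) b := by
  apply (σ ^ i).injective
  rw [h, pow_apply_pow_apply, Nat.add_sub_cancel' hij]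

lemma inv_pow_apply_pow_apply (σ : Equiv.Perm B) {i j : ℕ} (hij : i ≤ j) (a : B) :
    (σ⁻¹ ^ i) ((σ ^ j) a) = (σ ^ (j - i)) a := by
  rw [inv_pow, Equiv.Perm.inv_eq_iff_eq, pow_apply_pow_apply, Nat.add_sub_cancel' hij]

lemma sameOrbit_refl (σ : Equiv.Perm B) (a : B) : sameOrbit σ a a := ⟨0, rfl⟩

lemma sameOrbit_pow_apply (σ : Equiv.Perm B) (n : ℕ) (a : B) : sameOrbit σ a ((σ ^ n) a) :=
  ⟨n, rfl⟩

lemma sameOrbit_apply (σ : Equiv.Perm B) (a : B) : sameOrbit σ a (σ a) := ⟨1, by simp⟩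

lemma sameOrbit.trans (hab : sameOrbit σ a b) (hbc : sameOrbit σ b c) : sameOrbit σ a c := by
  obtain ⟨m, rfl⟩ := hab
  obtain ⟨n, rfl⟩ := hbc
  exact ⟨n + m, (pow_apply_pow_apply σ n m a).symm⟩

lemma not_orbit_subset_of_pow_apply_notMem {S : Set B} {n : ℕ} (h : (σ ^ n) a ∉ S) :
    ¬orbit σ a ⊆ S :=
  fun hsub => h (hsub (sameOrbit_pow_apply σ n a))

lemma not_orbit_subset_of_notMem (σ : Equiv.Perm B) {S : Set B} (h : a ∉ S) :
    ¬orbit σ a ⊆ S :=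
  fun hsub => h (hsub (sameOrbit_refl σ a))

variable [Finite B]

lemma sameOrbit_iff_sameCycle : sameOrbit σ a b ↔ σ.SameCycle a b :=
  ⟨fun ⟨n, h⟩ => ⟨n, by simpa using h⟩, fun h => h.exists_nat_pow_eq⟩

lemma sameOrbit.symm (h : sameOrbit σ a b) : sameOrbit σ b a :=
  sameOrbit_iff_sameCycle.2 (sameOrbit_iff_sameCycle.1 h).symm

lemma sameOrbit_inv_apply (σ : Equiv.Perm B) (a : B) : sameOrbit σ a (σ⁻¹ a) :=
  sameOrbit_iff_sameCycle.2 ⟨-1, by simp⟩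

lemma sameOrbit.exists_pos (h : sameOrbit σ a b) : ∃ n, 0 < n ∧ (σ ^ n) a = b := by
  obtain ⟨n, hn, -, hab⟩ := (sameOrbit_iff_sameCycle.1 h).exists_pow_eq''
  exact ⟨n, hn, hab⟩

lemma sameOrbit.orbit_eq (h : sameOrbit σ a b) : orbit σ a = orbit σ b :=
  Set.ext fun _ => ⟨h.symm.trans, h.trans⟩

end Orbits

section Steps

variable {B : Type*} {σ : Equiv.Perm B} {a b : B}

lemma pow_steps0_apply (h : sameOrbit σ a b) : (σ ^ steps0 σ a b) a = b :=
  Nat.sInf_mem (s := {n : ℕ | (σ ^ n) a = b}) h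

lemma steps0_le {n : ℕ} (h : (σ ^ n) a = b) : steps0 σ a b ≤ n :=
  Nat.sInf_le (s := {n : ℕ | (σ ^ n) a = b}) h

lemma steps0_self (σ : Equiv.Perm B) (a : B) : steps0 σ a a = 0 :=
  Nat.le_zero.1 (steps0_le rfl)

lemma steps_le {n : ℕ} (hn : 0 < n) (h : (σ ^ n) a = b) : steps σ a b ≤ n :=
  Nat.sInf_le (s := {n : ℕ | 0 < n ∧ (σ ^ n) a = b}) ⟨hn, h⟩

lemma steps0_apply (h : sameOrbit σ a b) (hne : σ b ≠ a) :
    steps0 σ a (σ b) = steps0 σ a b + 1 := by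
  apply le_antisymm
  · apply steps0_le
    rw [← apply_pow_apply, pow_steps0_apply h]
  · have hspec := pow_steps0_apply (h.trans (sameOrbit_apply σ b))
    rcases hk : steps0 σ a (σ b) with _ | k
    · rw [hk] at hspec
      exact absurd hspec.symm hne
    · rw [hk, ← apply_pow_apply] at hspec
      exact Nat.succ_le_succ (steps0_le (σ.injective hspec))

lemma steps0_pow_apply (h : sameOrbit σ a b) (n : ℕ)
    (hne : ∀ j, 0 < j → j ≤ n → (σ ^ j) b ≠ a) :
    steps0 σ a ((σ ^ n) b) = steps0 σ a b + n := by
  induction n with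
  | zero => rfl
  | succ n ih =>
    have hlast : σ ((σ ^ n) b) ≠ a := by
      rw [apply_pow_apply]
      exact hne _ n.succ_pos le_rfl
    rw [← apply_pow_apply, steps0_apply (h.trans (sameOrbit_pow_apply σ n b)) hlast,
      ih fun j hj hjn => hne j hj (Nat.le_succ_of_le hjn), add_assoc]

variable [Finite B]

lemma steps_spec (h : sameOrbit σ a b) : 0 < steps σ a b ∧ (σ ^ steps σ a b) a = b :=
  Nat.sInf_mem (s := {n : ℕ | 0 < n ∧ (σ ^ n) a = b}) h.exists_pos

lemma steps0_lt_minimalPeriod (h : sameOrbit σ a b) :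
    steps0 σ a b < Function.minimalPeriod σ a := by
  obtain ⟨n, rfl⟩ := h
  have hpos : 0 < Function.minimalPeriod σ a :=
    Function.minimalPeriod_pos_of_mem_periodicPts (σ.injective.mem_periodicPts a)
  refine (steps0_le ?_).trans_lt (Nat.mod_lt n hpos)
  simp only [← Equiv.Perm.iterate_eq_pow, Function.iterate_mod_minimalPeriod_eq]

lemma steps0_le_steps0_inv_apply (h : sameOrbit σ a b) :
    steps0 σ a b ≤ steps0 σ a (σ⁻¹ a) := by
  have hperiodic : Function.IsPeriodicPt σ (steps0 σ a (σ⁻¹ a) + 1) a := by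
    rw [Function.IsPeriodicPt, Function.IsFixedPt, Equiv.Perm.iterate_eq_pow, ← apply_pow_apply,
      pow_steps0_apply (sameOrbit_inv_apply σ a)]
    simp
  exact Nat.lt_succ_iff.1
    ((steps0_lt_minimalPeriod h).trans_le (hperiodic.minimalPeriod_le (Nat.succ_pos _)))

lemma pow_apply_injOn_Iic_steps0 (h : sameOrbit σ a b) :
    Set.InjOn (fun i => (σ ^ i) a) (Set.Iic (steps0 σ a b)) := by
  simp only [← Equiv.Perm.iterate_eq_pow]
  exact Function.iterate_injOn_Iio_minimalPeriod.mono
    fun _ hi => lt_of_le_of_lt hi (steps0_lt_minimalPeriod h)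

end Steps

section FirstExit

variable {B : Type*} {σ : Equiv.Perm B} {S : Set B} {x y : B} {m n : ℕ}

/-- `n` is the first exit time of `x` from `S`: the least `n > 0` with `σ^n x ∉ S`. Both `μ_β`
(for `S = T`) and `n_β` (for `S = T̃`) are of this form; `x` itself may or may not lie in `S`. -/
structure IsFirstExit (σ : Equiv.Perm B) (S : Set B) (x : B) (n : ℕ) : Prop where
  pos : 0 < n
  notMem : (σ ^ n) x ∉ S
  mem : ∀ i, 0 < i → i < n → (σ ^ i) x ∈ S

lemma isFirstExit_sInf [Finite B] (h : ¬orbit σ x ⊆ S) :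
    IsFirstExit σ S x (sInf {i : ℕ | 0 < i ∧ (σ ^ i) x ∉ S}) := by
  have hne : {i : ℕ | 0 < i ∧ (σ ^ i) x ∉ S}.Nonempty := by
    obtain ⟨y, hy, hyS⟩ := Set.not_subset.1 h
    obtain ⟨n, hn, rfl⟩ := sameOrbit.exists_pos hy
    exact ⟨n, hn, hyS⟩
  exact ⟨(Nat.sInf_mem hne).1, (Nat.sInf_mem hne).2, fun i hi hlt =>
    by_contra fun hiS => Nat.notMem_of_lt_sInf hlt ⟨hi, hiS⟩⟩

namespace IsFirstExit

lemma le (h : IsFirstExit σ S x n) (hm : 0 < m) (hmS : (σ ^ m) x ∉ S) : n ≤ m :=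
  not_lt.1 fun hlt => hmS (h.mem m hm hlt)

lemma unique (h : IsFirstExit σ S x n) (h' : IsFirstExit σ S x m) : n = m :=
  le_antisymm (h.le h'.pos h'.notMem) (h'.le h.pos h.notMem)

lemma pow_apply (h : IsFirstExit σ S x n) {i : ℕ} (hi : i < n) :
    IsFirstExit σ S ((σ ^ i) x) (n - i) where
  pos := Nat.sub_pos_of_lt hi
  notMem := by rw [pow_apply_pow_apply, Nat.sub_add_cancel hi.le]; exact h.notMem
  mem j hj hjn := by rw [pow_apply_pow_apply]; exact h.mem _ (by omega) (by omega)

lemma succ (h : IsFirstExit σ S (σ x) n) (hx : σ x ∈ S) : IsFirstExit σ S x (n + 1) where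
  pos := n.succ_pos
  notMem := by rw [← pow_apply_apply]; exact h.notMem
  mem
    | 1, _, _ => by simpa using hx
    | i + 2, _, hi => by rw [← pow_apply_apply]; exact h.mem _ i.succ_pos (by omega)

lemma union_singleton (h : IsFirstExit σ S x n) (hy : (σ ^ n) x ≠ y) :
    IsFirstExit σ (S ∪ {y}) x n where
  pos := h.pos
  notMem := by simp [h.notMem, hy]
  mem i hi hin := Or.inl (h.mem i hi hin)

lemma concat (h : IsFirstExit σ S x n) (h' : IsFirstExit σ S ((σ ^ n) x) m)
    (hne : (σ ^ m) ((σ ^ n) x) ≠ (σ ^ n) x) :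
    IsFirstExit σ (S ∪ {(σ ^ n) x}) x (n + m) where
  pos := Nat.add_pos_left h.pos m
  notMem := by
    rw [add_comm, ← pow_apply_pow_apply]
    exact (h'.union_singleton hne).notMem
  mem i hi hinm := by
    rcases lt_trichotomy i n with hlt | rfl | hgt
    · exact Or.inl (h.mem i hi hlt)
    · exact Or.inr rfl
    · obtain ⟨j, rfl⟩ := Nat.exists_eq_add_of_lt hgt
      left
      rw [add_assoc, add_comm, ← pow_apply_pow_apply]
      exact h'.mem _ j.succ_pos (by omega)

/-- A run through `S` cannot be entered from a point outside `S`, except at its start. -/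
lemma eq_of_pow_apply_eq (h : IsFirstExit σ S x n) (hy : y ∉ S) {i j : ℕ} (hji : j ≤ i)
    (hin : i < n + j) (heq : (σ ^ i) x = (σ ^ j) y) : i = j ∧ x = y := by
  obtain rfl : i = j := by
    by_contra hne
    apply hy
    rw [eq_pow_sub_apply hji heq.symm]
    exact h.mem _ (by omega) (by omega)
  exact ⟨rfl, (σ ^ i).injective heq⟩

lemma pow_apply_ne_pow_apply (hx : IsFirstExit σ S x n) (hy : IsFirstExit σ S y m)
    (hxS : x ∉ S) (hyS : y ∉ S) (hne : x ≠ y) {i j : ℕ} (hi : i < n) (hj : j < m) :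
    (σ ^ i) x ≠ (σ ^ j) y := by
  intro heq
  rcases le_total j i with hji | hij
  · exact hne (hx.eq_of_pow_apply_eq hyS hji (by omega) heq).2
  · exact hne (hy.eq_of_pow_apply_eq hxS hij (by omega) heq.symm).2.symm

lemma pow_apply_injOn_Ioo (h : IsFirstExit σ S x n) (hx : x ∉ S) :
    Set.InjOn (fun i => (σ ^ i) x) (Set.Ioo 0 n) := by
  rintro i ⟨-, hi⟩ j ⟨-, hj⟩ heq
  rcases le_total j i with hji | hij
  · exact (h.eq_of_pow_apply_eq hx hji (by omega) heq).1
  · exact (h.eq_of_pow_apply_eq hx hij (by omega) heq.symm).1.symm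

lemma orbit_diff_subset_singleton (h : IsFirstExit σ S x n) (hreturn : (σ ^ n) x = x) :
    orbit σ x \ S ⊆ {x} := by
  rintro y ⟨⟨k, rfl⟩, hyS⟩
  have hmod : (σ ^ (k % n)) x = (σ ^ k) x := by
    simp only [← Equiv.Perm.iterate_eq_pow] at hreturn ⊢
    exact Function.IsPeriodicPt.iterate_mod_apply hreturn k
  rw [← hmod] at hyS ⊢
  rcases Nat.eq_zero_or_pos (k % n) with hzero | hpos
  · rw [hzero]; rfl
  · exact absurd (h.mem _ hpos (Nat.mod_lt k h.pos)) hyS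

lemma steps_eq [Finite B] (h : IsFirstExit σ S x n) : steps σ x ((σ ^ n) x) = n := by
  obtain ⟨hpos, hspec⟩ := steps_spec (sameOrbit_pow_apply σ n x)
  refine le_antisymm (steps_le h.pos rfl) (h.le hpos ?_)
  rw [hspec]
  exact h.notMem

end IsFirstExit

end FirstExit

section Mu

variable {B : Type*} [Finite B] {σ : Equiv.Perm B} {T : Set B} {a : B}

lemma isFirstExit_mu (h : ¬orbit σ a ⊆ T) : IsFirstExit σ T a (mu σ T a) := by
  rw [mu, if_neg h]
  exact isFirstExit_sInf h

lemma isFirstExit_nn (h : ¬orbit σ a ⊆ tilde σ T) : IsFirstExit σ (tilde σ T) a (nn σ T a) :=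
  isFirstExit_sInf h

lemma IsFirstExit.mu_eq {n : ℕ} (h : IsFirstExit σ T a n) : mu σ T a = n :=
  (isFirstExit_mu (not_orbit_subset_of_pow_apply_notMem h.notMem)).unique h

lemma mu_eq_mu_apply_add_one (h : ¬orbit σ a ⊆ T) (ha : σ a ∈ T) :
    mu σ T a = mu σ T (σ a) + 1 := by
  rw [(sameOrbit_apply σ a).orbit_eq] at h
  exact ((isFirstExit_mu h).succ ha).mu_eq

end Mu

section Tilde

variable {B : Type*} {σ : Equiv.Perm B} {T C : Set B} {a : B}

lemma isChainIn_image_Ioo {n : ℕ} (hn : 1 < n) (ha : a ∉ T) (h : IsFirstExit σ T a n) :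
    IsChainIn σ T ((fun i => (σ ^ i) a) '' Set.Ioo 0 n) := by
  obtain ⟨m, rfl⟩ := Nat.exists_eq_add_of_le' (Nat.succ_le_of_lt hn)
  have hpow : ∀ i ≤ m + 1, (σ⁻¹ ^ i) ((σ ^ (m + 1)) a) = (σ ^ (m + 1 - i)) a := fun i hi =>
    inv_pow_apply_pow_apply σ hi a
  refine ⟨(σ ^ (m + 1)) a, m, ?_, ?_, fun i hi => ?_, Set.ext fun τ => ⟨?_, ?_⟩⟩
  · rw [apply_pow_apply]
    exact h.notMem
  · rw [hpow _ le_rfl, Nat.sub_self]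
    exact ha
  · rw [hpow i (by omega)]
    exact h.mem _ (by omega) (by omega)
  · rintro ⟨i, ⟨hi, him⟩, rfl⟩
    refine ⟨m + 1 - i, by omega, ?_⟩
    simp only [hpow _ (Nat.sub_le _ _), Nat.sub_sub_self (show i ≤ m + 1 by omega)]
  · rintro ⟨i, hi, rfl⟩
    exact ⟨m + 1 - i, ⟨by omega, by omega⟩, (hpow i (by omega)).symm⟩

lemma IsChainIn.exists_eq_image_Ioo (h : IsChainIn σ T C) :
    ∃ (a : B) (n : ℕ), 1 < n ∧ a ∉ T ∧ IsFirstExit σ T a n ∧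
      C = (fun i => (σ ^ i) a) '' Set.Ioo 0 n := by
  obtain ⟨δ, m, hend, hstart, hmem, rfl⟩ := h
  have hpow : ∀ i ≤ m + 1, (σ ^ i) ((σ⁻¹ ^ (m + 1)) δ) = (σ⁻¹ ^ (m + 1 - i)) δ := fun i hi => by
    simpa using inv_pow_apply_pow_apply σ⁻¹ hi δ
  refine ⟨(σ⁻¹ ^ (m + 1)) δ, m + 2, by omega, hstart, ⟨by omega, ?_, fun i hi him => ?_⟩,
    Set.ext fun τ => ⟨?_, ?_⟩⟩
  · rw [← apply_pow_apply, hpow _ le_rfl, Nat.sub_self]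
    exact hend
  · rw [hpow i (by omega)]
    exact hmem _ (by omega)
  · rintro ⟨i, hi, rfl⟩
    refine ⟨m + 1 - i, ⟨by omega, by omega⟩, ?_⟩
    simp only [hpow _ (Nat.sub_le _ _), Nat.sub_sub_self (Nat.le_succ_of_le hi)]
  · rintro ⟨i, ⟨hi, him⟩, rfl⟩
    exact ⟨m + 1 - i, by omega, hpow i (by omega)⟩

/-- The chain `{σa, …, σ^{n-1}a}` has `n - 1` elements, so its parity is opposite to that of `n`. -/
lemma mem_chainExt_iff {n : ℕ} (hn : 1 < n) (ha : a ∉ T) (h : IsFirstExit σ T a n) {τ : B}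
    (hτ : τ ∉ T) :
    τ ∈ chainExt σ ((fun i => (σ ^ i) a) '' Set.Ioo 0 n) ↔ Even n ∧ τ = a := by
  have hcard : ((fun i => (σ ^ i) a) '' Set.Ioo 0 n).ncard = n - 1 := by
    rw [(h.pow_apply_injOn_Ioo ha).ncard_image, ← Finset.coe_Ioo, Set.ncard_coe_finset,
      Nat.card_Ioo, Nat.sub_zero]
  have hparity : Odd (n - 1) ↔ Even n := by grind
  have hnotMem : τ ∉ (fun i => (σ ^ i) a) '' Set.Ioo 0 n := by
    rintro ⟨i, ⟨hi, hin⟩, rfl⟩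
    exact hτ (h.mem i hi hin)
  have hbefore : τ ∈ ⇑σ⁻¹ '' ((fun i => (σ ^ i) a) '' Set.Ioo 0 n) ↔ τ = a := by
    constructor
    · rintro ⟨-, ⟨i, ⟨hi, hin⟩, rfl⟩, rfl⟩
      obtain ⟨j, rfl⟩ := Nat.exists_eq_add_of_lt hi
      rw [zero_add] at hin hτ ⊢
      have hinv : σ⁻¹ ((σ ^ (j + 1)) a) = (σ ^ j) a := by simp [← apply_pow_apply]
      simp only [hinv] at hτ ⊢
      rcases Nat.eq_zero_or_pos j with rfl | hj
      · rfl
      · exact absurd (h.mem j hj (by omega)) hτ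
    · rintro rfl
      exact ⟨σ τ, ⟨1, ⟨one_pos, hn⟩, by simp⟩, by simp⟩
  rw [chainExt, hcard]
  split_ifs with hodd
  · rw [Set.mem_union, hbefore, ← hparity]
    simp [hnotMem, hodd]
  · simp [hnotMem, ← hparity, hodd]

lemma notMem_of_notMem_tilde (h : a ∉ tilde σ T) : a ∉ T := fun ha => h (Or.inl ha)

variable [Finite B]

lemma one_lt_mu_of_even (ha : a ∉ T) (heven : Even (mu σ T a)) : 1 < mu σ T a := by
  have hpos := (isFirstExit_mu (not_orbit_subset_of_notMem σ ha)).pos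
  grind

lemma mem_tilde_iff : a ∈ tilde σ T ↔ a ∈ T ∨ Even (mu σ T a) := by
  by_cases ha : a ∈ T
  · simp [tilde, ha]
  have hmem : a ∈ tilde σ T ↔ ∃ C, IsChainIn σ T C ∧ a ∈ chainExt σ C := by
    simp [tilde, ha]
  rw [hmem, or_iff_right ha]
  constructor
  · rintro ⟨C, hC, haC⟩
    obtain ⟨a', n, hn, ha', hexit, rfl⟩ := hC.exists_eq_image_Ioo
    obtain ⟨heven, rfl⟩ := (mem_chainExt_iff hn ha' hexit ha).1 haC
    rwa [hexit.mu_eq]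
  · intro heven
    have hexit := isFirstExit_mu (not_orbit_subset_of_notMem σ ha)
    have hlt := one_lt_mu_of_even ha heven
    exact ⟨_, isChainIn_image_Ioo hlt ha hexit,
      (mem_chainExt_iff hlt ha hexit ha).2 ⟨heven, rfl⟩⟩

lemma apply_mem_of_mem_tilde (h : a ∈ tilde σ T) (ha : a ∉ T) : σ a ∈ T := by
  have heven : Even (mu σ T a) := (mem_tilde_iff.1 h).resolve_left ha
  simpa using (isFirstExit_mu (not_orbit_subset_of_notMem σ ha)).mem 1 one_pos
    (one_lt_mu_of_even ha heven)

lemma odd_mu_of_notMem_tilde (h : a ∉ tilde σ T) : Odd (mu σ T a) :=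
  Nat.not_even_iff_odd.1 fun heven => h (mem_tilde_iff.2 (Or.inr heven))

end Tilde

section Sign

variable {B : Type*} {σ : Equiv.Perm B} {T : Set B} {a : B}

lemma epsT_of_orbit_subset (h : orbit σ a ⊆ T) : epsT σ T a = 0 := if_pos h

lemma epsT_of_notMem_tilde (h : a ∉ tilde σ T) : epsT σ T a = 1 := by
  rw [epsT, if_neg (not_orbit_subset_of_notMem σ (notMem_of_notMem_tilde h)), if_neg h]

variable [Finite B]

lemma epsT_of_not_orbit_subset (h : ¬orbit σ a ⊆ T) : epsT σ T a = -(-1) ^ mu σ T a := by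
  rw [epsT, if_neg h]
  split_ifs with htilde
  · obtain ⟨k, hk⟩ := Nat.exists_eq_add_of_lt (isFirstExit_mu h).pos
    simp [hk, pow_succ]
  · simp [(odd_mu_of_notMem_tilde htilde).neg_one_pow]

lemma epsT_of_mem_tilde (h : a ∈ tilde σ T) (ha : a ∉ T) : epsT σ T a = -1 := by
  rw [epsT_of_not_orbit_subset (not_orbit_subset_of_notMem σ ha),
    ((mem_tilde_iff.1 h).resolve_left ha).neg_one_pow]

lemma epsT_le_one (σ : Equiv.Perm B) (T : Set B) (a : B) : epsT σ T a ≤ 1 := by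
  by_cases h : orbit σ a ⊆ T
  · simp [epsT_of_orbit_subset h]
  · rcases neg_one_pow_eq_or ℚ (mu σ T a) with hsign | hsign <;>
      norm_num [epsT_of_not_orbit_subset h, hsign]

lemma epsT_mul_self (ha : a ∉ T) : epsT σ T a * epsT σ T a = 1 := by
  rw [epsT_of_not_orbit_subset (not_orbit_subset_of_notMem σ ha), neg_mul_neg, ← mul_pow]
  norm_num

lemma epsT_apply (h : σ a ∈ T) : epsT σ T (σ a) = -epsT σ T a := by
  have horbit := (sameOrbit_apply σ a).orbit_eq
  by_cases hfull : orbit σ a ⊆ T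
  · rw [epsT_of_orbit_subset hfull, epsT_of_orbit_subset (horbit ▸ hfull), neg_zero]
  · rw [epsT_of_not_orbit_subset hfull, epsT_of_not_orbit_subset (horbit ▸ hfull),
      mu_eq_mu_apply_add_one hfull h, pow_succ, mul_neg_one, neg_neg]

lemma epsT_of_mem_Tscr (h : a ∈ Tscr σ T) : epsT σ T a = 1 := by
  rcases h with ha | ⟨δ, ⟨hδ, hδT⟩, rfl⟩
  · exact epsT_of_notMem_tilde ha
  · rw [epsT_apply (apply_mem_of_mem_tilde hδ hδT), epsT_of_mem_tilde hδ hδT, neg_neg]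

end Sign

section Functionals

variable {B : Type*} {σ : Equiv.Perm B} {p : ℕ} {ε : B → ℚ} {T : Set B} {a b c τ : B}

/-- The functional `L^ε[a, b]` as a linear map. -/
noncomputable def LfunLin (σ : Equiv.Perm B) (p : ℕ) (ε : B → ℚ) (a b : B) : (B → ℚ) →ₗ[ℚ] ℚ where
  toFun := Lfun σ p ε a b
  map_add' := by simp [Lfun, mul_add, Finset.sum_add_distrib]
  map_smul' := by simp [Lfun, Finset.mul_sum, mul_left_comm]

lemma LfunLin_apply (κ : B → ℚ) : LfunLin σ p ε a b κ =
    ∑ i ∈ Finset.range (steps0 σ a b + 1), ε ((σ ^ i) a) * (p : ℚ) ^ i * κ ((σ ^ i) a) :=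
  rfl

/-- The point `σ^{μ_τ} τ` at which the run of `τ` leaves `T`. -/
noncomputable def exitPt (σ : Equiv.Perm B) (T : Set B) (τ : B) : B := (σ ^ mu σ T τ) τ

lemma sameOrbit_exitPt (σ : Equiv.Perm B) (T : Set B) (τ : B) : sameOrbit σ τ (exitPt σ T τ) :=
  sameOrbit_pow_apply σ _ τ

/-- The functional `L_{T,τ}` as a linear map. For `τ ∉ T` both cases of its definition stop just
before the exit point of `τ`. -/
noncomputable def LTLin (σ : Equiv.Perm B) (p : ℕ) (T : Set B) (τ : B) : (B → ℚ) →ₗ[ℚ] ℚ :=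
  LfunLin σ p (epsT σ T) (if τ ∈ tilde σ T then τ else exitPt σ T τ) (σ⁻¹ (exitPt σ T τ))

lemma LfunLin_e_of_ne [DecidableEq B] (h : ∀ i ≤ steps0 σ a b, (σ ^ i) a ≠ c) :
    LfunLin σ p ε a b (e c) = 0 := by
  rw [LfunLin_apply]
  refine Finset.sum_eq_zero fun i hi => ?_
  rw [e, if_neg (h i (Finset.mem_range_succ_iff.1 hi)), mul_zero]

lemma LfunLin_e_apply [DecidableEq B] (h : sameOrbit σ a b) (hcb : c ≠ b) (hca : σ c ≠ a)
    (hε : ε (σ c) = -ε c) :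
    LfunLin σ p ε a b (e (σ c)) = -(p * LfunLin σ p ε a b (e c)) := by
  have hfirst : e (σ c) ((σ ^ 0) a) = 0 := if_neg hca.symm
  have hlast : e c ((σ ^ steps0 σ a b) a) = 0 := if_neg (by rw [pow_steps0_apply h]; exact hcb.symm)
  rw [LfunLin_apply, LfunLin_apply, Finset.sum_range_succ', Finset.sum_range_succ, hfirst, hlast,
    mul_zero, mul_zero, add_zero, add_zero, Finset.mul_sum, ← Finset.sum_neg_distrib]
  refine Finset.sum_congr rfl fun i _ => ?_
  rw [← apply_pow_apply]
  by_cases hi : (σ ^ i) a = c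
  · rw [hi, hε, e, e, if_pos rfl, if_pos rfl]
    ring
  · rw [e, e, if_neg hi, if_neg (σ.injective.ne hi)]
    ring

lemma LTLin_e_of_not_sameOrbit [DecidableEq B] (h : ¬sameOrbit σ τ c) :
    LTLin σ p T τ (e c) = 0 := by
  refine LfunLin_e_of_ne fun i _ hi => h ?_
  subst hi
  split_ifs
  · exact sameOrbit_pow_apply σ i τ
  · exact (sameOrbit_exitPt σ T τ).trans (sameOrbit_pow_apply σ i _)

variable [Finite B]

lemma LfunLin_e [DecidableEq B] (h : sameOrbit σ a c) (hb : sameOrbit σ a b)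
    (hle : steps0 σ a c ≤ steps0 σ a b) :
    LfunLin σ p ε a b (e c) = ε c * (p : ℚ) ^ steps0 σ a c := by
  rw [LfunLin_apply, Finset.sum_eq_single (steps0 σ a c)]
  · rw [pow_steps0_apply h, e, if_pos rfl, mul_one]
  · intro i hi hne
    have hi' : (σ ^ i) a ≠ c := fun hic => hne <| pow_apply_injOn_Iic_steps0 hb
      (Finset.mem_range_succ_iff.1 hi) hle (hic.trans (pow_steps0_apply h).symm)
    rw [e, if_neg hi', mul_zero]
  · exact fun hnot => absurd (Finset.mem_range_succ_iff.2 hle) hnot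

lemma inv_exitPt (hτ : τ ∉ T) : σ⁻¹ (exitPt σ T τ) = (σ ^ (mu σ T τ - 1)) τ := by
  have hpos := (isFirstExit_mu (not_orbit_subset_of_notMem σ hτ)).pos
  rw [Equiv.Perm.inv_eq_iff_eq, apply_pow_apply, Nat.sub_add_cancel hpos, exitPt]

lemma coe_LTLin (hτ : τ ∉ T) : ⇑(LTLin σ p T τ) = LT σ p T τ := by
  funext κ
  rw [LT, LTLin, ← inv_exitPt hτ]
  split_ifs <;> rfl

lemma exitPt_notMem (hτ : τ ∉ T) : exitPt σ T τ ∉ T :=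
  (isFirstExit_mu (not_orbit_subset_of_notMem σ hτ)).notMem

lemma sameOrbit_inv_exitPt (σ : Equiv.Perm B) (T : Set B) (τ : B) :
    sameOrbit σ τ (σ⁻¹ (exitPt σ T τ)) :=
  (sameOrbit_exitPt σ T τ).trans (sameOrbit_inv_apply σ _)

variable [DecidableEq B]

lemma LTLin_e_of_notMem_tilde (hτ : τ ∉ tilde σ T) (h : sameOrbit σ τ c) :
    LTLin σ p T τ (e c) = epsT σ T c * (p : ℚ) ^ steps0 σ (exitPt σ T τ) c := by
  rw [LTLin, if_neg hτ]
  have hc : sameOrbit σ (exitPt σ T τ) c := (sameOrbit_exitPt σ T τ).symm.trans h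
  exact LfunLin_e hc (sameOrbit_inv_apply σ _) (steps0_le_steps0_inv_apply hc)

lemma LTLin_e_self (hτ : τ ∈ tilde σ T) (hτT : τ ∉ T) : LTLin σ p T τ (e τ) = -1 := by
  rw [LTLin, if_pos hτ, LfunLin_e (sameOrbit_refl σ τ) (sameOrbit_inv_exitPt σ T τ)
    (by simp [steps0_self]), steps0_self, epsT_of_mem_tilde hτ hτT, pow_zero, mul_one]

lemma LTLin_e_of_ne (hτ : τ ∈ tilde σ T) (hτT : τ ∉ T) (hc : c ∉ T) (hne : c ≠ τ) :
    LTLin σ p T τ (e c) = 0 := by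
  have hexit := isFirstExit_mu (not_orbit_subset_of_notMem σ hτT)
  rw [LTLin, if_pos hτ]
  refine LfunLin_e_of_ne fun i hi hic => ?_
  have hlt : i < mu σ T τ :=
    (hi.trans (steps0_le (inv_exitPt hτT).symm)).trans_lt (Nat.sub_lt hexit.pos one_pos)
  rcases Nat.eq_zero_or_pos i with rfl | hpos
  · exact hne hic.symm
  · exact hc (hic ▸ hexit.mem i hpos hlt)

lemma LTLin_e_nonpos (hτ : τ ∈ tilde σ T) (hτT : τ ∉ T) (hc : c ∉ T) :
    LTLin σ p T τ (e c) ≤ 0 := by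
  by_cases hne : c = τ
  · rw [hne, LTLin_e_self hτ hτT]
    norm_num
  · rw [LTLin_e_of_ne hτ hτT hc hne]

lemma LTLin_e_apply (hτ : τ ∉ T) (hc : σ c ∈ T) :
    LTLin σ p T τ (e (σ c)) = -(p * LTLin σ p T τ (e c)) := by
  have hstart : (if τ ∈ tilde σ T then τ else exitPt σ T τ) ∉ T := by
    split_ifs
    · exact hτ
    · exact exitPt_notMem hτ
  refine LfunLin_e_apply ?_ ?_ (fun heq => hstart (heq ▸ hc)) (epsT_apply hc)
  · split_ifs
    · exact sameOrbit_inv_exitPt σ T τ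
    · exact sameOrbit_inv_apply σ _
  · rintro rfl
    exact exitPt_notMem hτ (by simpa using hc)

lemma LTLin_bsimple (hτ : τ ∉ T) (hc : c ∈ T) : LTLin σ p T τ (bsimple σ p c) = 0 := by
  obtain ⟨d, rfl⟩ := σ.surjective c
  simp [bsimple, LTLin_e_apply hτ hc]

lemma LTLin_e_nonneg_of_mem_Tscr (hτ : τ ∈ tilde σ T) (hτT : τ ∉ T) (hc : c ∈ Tscr σ T) :
    0 ≤ LTLin σ p T τ (e c) := by
  rcases hc with hc | ⟨d, ⟨hd, hdT⟩, rfl⟩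
  · exact (LTLin_e_of_ne hτ hτT (notMem_of_notMem_tilde hc) fun h => hc (h ▸ hτ)).ge
  · rw [LTLin_e_apply hτT (apply_mem_of_mem_tilde hd hdT), ← mul_neg]
    exact mul_nonneg p.cast_nonneg (neg_nonneg.2 (LTLin_e_nonpos hτ hτT hdT))

lemma LTLin_hvec_nonneg (hp : 1 ≤ p) (hτ : τ ∉ T) (hb : b ∉ T) (hc : c ∈ Tscr σ T)
    (hbc : sameOrbit σ b c) : 0 ≤ LTLin σ p T τ (hvec σ p b c) := by
  rw [hvec, map_add, map_neg, map_smul, smul_eq_mul, neg_add_eq_sub, sub_nonneg]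
  by_cases horbit : sameOrbit σ τ b
  swap
  · rw [LTLin_e_of_not_sameOrbit horbit,
      LTLin_e_of_not_sameOrbit fun h => horbit (h.trans hbc.symm), mul_zero]
  by_cases htilde : τ ∈ tilde σ T
  · exact (LTLin_e_nonpos htilde hτ hb).trans
      (mul_nonneg (by positivity) (LTLin_e_nonneg_of_mem_Tscr htilde hτ hc))
  · rw [LTLin_e_of_notMem_tilde htilde horbit,
      LTLin_e_of_notMem_tilde htilde (horbit.trans hbc), epsT_of_mem_Tscr hc, one_mul, ← pow_add]
    have hsteps : steps0 σ (exitPt σ T τ) b ≤ steps σ c b + steps0 σ (exitPt σ T τ) c := by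
      apply steps0_le
      rw [← pow_apply_pow_apply, pow_steps0_apply
        ((sameOrbit_exitPt σ T τ).symm.trans (horbit.trans hbc)), (steps_spec hbc.symm).2]
    calc epsT σ T b * (p : ℚ) ^ steps0 σ (exitPt σ T τ) b
        ≤ 1 * (p : ℚ) ^ steps0 σ (exitPt σ T τ) b := by
          gcongr
          exact epsT_le_one σ T b
      _ ≤ (p : ℚ) ^ (steps σ c b + steps0 σ (exitPt σ T τ) c) := by
          rw [one_mul]
          exact pow_le_pow_right₀ (mod_cast hp) hsteps

end Functionals

section DualBasis

variable {B : Type*} {σ : Equiv.Perm B} {p : ℕ} {T : Set B} {a τ : B}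

lemma steps0_exitPt_pow_nn_apply [Finite B] (hτ : τ ∉ tilde σ T) (ha : a ∉ T)
    (horbit : sameOrbit σ τ a) (hne : a ≠ τ) :
    steps0 σ (exitPt σ T τ) ((σ ^ nn σ T a) a) = steps0 σ (exitPt σ T τ) a + nn σ T a := by
  have htilde : ¬orbit σ a ⊆ tilde σ T := fun h => hτ (h horbit.symm)
  have hτexit := isFirstExit_mu (not_orbit_subset_of_notMem σ (notMem_of_notMem_tilde hτ))
  refine steps0_pow_apply ((sameOrbit_exitPt σ T τ).symm.trans horbit) _ fun j hj hjn heq => ?_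
  rcases le_total (mu σ T τ) j with hle | hle
  · exact hne ((isFirstExit_nn htilde).eq_of_pow_apply_eq hτ hle
      (by have := hτexit.pos; omega) heq).2
  · exact hne (hτexit.eq_of_pow_apply_eq ha hle (by omega) heq.symm).2.symm

variable [DecidableEq B]

lemma gvec_of_orbit_subset (ha : a ∉ T) (h : orbit σ a ⊆ tilde σ T) : gvec σ p T a = -e a := by
  rw [gvec, if_neg ha, if_pos h]

variable [Finite B]

lemma gvec_of_not_orbit_subset (ha : a ∉ T) (h : ¬orbit σ a ⊆ tilde σ T) :
    gvec σ p T a = (epsT σ T a * (p : ℚ) ^ nn σ T a) • e a - e ((σ ^ nn σ T a) a) := by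
  rw [gvec, if_neg ha, if_neg h]
  split_ifs with htilde
  · rw [epsT_of_mem_tilde htilde ha, fB, neg_one_mul, neg_smul]
    abel
  · rw [epsT_of_notMem_tilde htilde, fH, one_mul]
    abel

lemma LTLin_gvec_of_ne (hτ : τ ∉ T) (hne : a ≠ τ) : LTLin σ p T τ (gvec σ p T a) = 0 := by
  by_cases ha : a ∈ T
  · rw [gvec, if_pos ha, LTLin_bsimple hτ ha]
  by_cases hfull : orbit σ a ⊆ tilde σ T
  · rw [gvec_of_orbit_subset ha hfull, map_neg, neg_eq_zero]
    by_cases horbit : sameOrbit σ τ a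
    · exact LTLin_e_of_ne (hfull horbit.symm) hτ ha hne
    · exact LTLin_e_of_not_sameOrbit horbit
  have hexit := (isFirstExit_nn hfull).notMem
  rw [gvec_of_not_orbit_subset ha hfull, map_sub, map_smul, smul_eq_mul, sub_eq_zero]
  by_cases horbit : sameOrbit σ τ a
  swap
  · have hexit_orbit : ¬sameOrbit σ τ ((σ ^ nn σ T a) a) := fun h =>
      horbit (h.trans (sameOrbit_pow_apply σ _ a).symm)
    rw [LTLin_e_of_not_sameOrbit horbit, LTLin_e_of_not_sameOrbit hexit_orbit, mul_zero]
  by_cases htilde : τ ∈ tilde σ T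
  · rw [LTLin_e_of_ne htilde hτ ha hne, LTLin_e_of_ne htilde hτ (notMem_of_notMem_tilde hexit)
      (ne_of_mem_of_not_mem htilde hexit).symm, mul_zero]
  · rw [LTLin_e_of_notMem_tilde htilde horbit,
      LTLin_e_of_notMem_tilde htilde (horbit.trans (sameOrbit_pow_apply σ _ a)),
      epsT_of_notMem_tilde hexit, steps0_exitPt_pow_nn_apply htilde ha horbit hne,
      mul_mul_mul_comm, epsT_mul_self ha, one_mul, one_mul, pow_add, mul_comm]

lemma LTLin_gvec_self_pos (hp : 1 < p) (hτ : τ ∉ T) : 0 < LTLin σ p T τ (gvec σ p T τ) := by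
  by_cases hfull : orbit σ τ ⊆ tilde σ T
  · rw [gvec_of_orbit_subset hτ hfull, map_neg, LTLin_e_self (hfull (sameOrbit_refl σ τ)) hτ]
    norm_num
  have hexit := isFirstExit_nn hfull
  rw [gvec_of_not_orbit_subset hτ hfull, map_sub, map_smul, smul_eq_mul, sub_pos]
  by_cases htilde : τ ∈ tilde σ T
  · rw [LTLin_e_self htilde hτ, LTLin_e_of_ne htilde hτ (notMem_of_notMem_tilde hexit.notMem)
      (ne_of_mem_of_not_mem htilde hexit.notMem).symm, epsT_of_mem_tilde htilde hτ]
    simp only [neg_one_mul, mul_neg_one, neg_neg]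
    positivity
  · rw [LTLin_e_of_notMem_tilde htilde (sameOrbit_refl σ τ),
      LTLin_e_of_notMem_tilde htilde (sameOrbit_pow_apply σ _ τ), epsT_of_notMem_tilde htilde,
      epsT_of_notMem_tilde hexit.notMem, one_mul, one_mul, one_mul, ← pow_add]
    have hmu := isFirstExit_mu (not_orbit_subset_of_notMem σ hτ)
    have hle : mu σ T τ ≤ nn σ T τ := hmu.le hexit.pos (notMem_of_notMem_tilde hexit.notMem)
    have hsteps : steps0 σ (exitPt σ T τ) ((σ ^ nn σ T τ) τ) ≤ nn σ T τ - mu σ T τ := by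
      apply steps0_le
      rw [exitPt, pow_apply_pow_apply, Nat.sub_add_cancel hle]
    have hpos := hmu.pos
    exact pow_lt_pow_right₀ (mod_cast hp) (by omega)

lemma linearIndependent_bsimple (hp : 1 < p) : LinearIndependent ℚ (bsimple σ p) := by
  have := Fintype.ofFinite B
  refine Fintype.linearIndependent_iff.2 fun c hc => ?_
  have hrec : ∀ γ, c (σ⁻¹ γ) + c γ * p = 0 := fun γ => by
    simpa [bsimple, e, Finset.sum_apply, mul_add, Finset.sum_add_distrib, eq_comm] using
      congr_fun hc (σ⁻¹ γ)
  intro i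
  have : Nonempty B := ⟨i⟩
  obtain ⟨m, hm⟩ := Finite.exists_max fun γ => |c γ|
  have hgrow : |c m| * p ≤ |c m| := by
    have habs : |c m| * p = |c (σ⁻¹ m)| := by
      rw [eq_neg_of_add_eq_zero_left (hrec m), abs_neg, abs_mul, Nat.abs_cast]
    exact habs.trans_le (hm _)
  have hzero : |c m| ≤ 0 := by
    have hp' : (1 : ℚ) < p := mod_cast hp
    nlinarith [abs_nonneg (c m)]
  exact abs_nonpos_iff.1 ((hm i).trans hzero)

end DualBasis

section Expansion

variable {B : Type*} [DecidableEq B] {σ : Equiv.Perm B} {p : ℕ} {T : Set B} {τ : B}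

lemma LTLin_sum_gvec [Fintype B] (c : B → ℚ) (hτ : τ ∉ T) :
    LTLin σ p T τ (∑ a, c a • gvec σ p T a) = c τ * LTLin σ p T τ (gvec σ p T τ) := by
  rw [map_sum, Finset.sum_eq_single τ]
  · rw [map_smul, smul_eq_mul]
  · intro a _ hne
    rw [map_smul, LTLin_gvec_of_ne hτ hne, smul_zero]
  · exact fun h => absurd (Finset.mem_univ τ) h

lemma linearIndependent_gvec [Finite B] (hp : 1 < p) : LinearIndependent ℚ (gvec σ p T) := by
  have := Fintype.ofFinite B
  refine Fintype.linearIndependent_iff.2 fun c hc => ?_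
  have hoff : ∀ a ∉ T, c a = 0 := fun a ha => by
    have hzero := LTLin_sum_gvec (σ := σ) (p := p) c ha
    rw [hc, map_zero] at hzero
    exact (mul_eq_zero.1 hzero.symm).resolve_right (LTLin_gvec_self_pos hp ha).ne'
  refine Fintype.linearIndependent_iff.1 (linearIndependent_bsimple (σ := σ) hp) c ?_
  rw [← hc]
  refine Finset.sum_congr rfl fun a _ => ?_
  by_cases ha : a ∈ T
  · rw [gvec, if_pos ha]
  · rw [hoff a ha, zero_smul, zero_smul]

lemma exists_eq_sum_gvec [Fintype B] (hp : 1 < p) (σ : Equiv.Perm B) (T : Set B) (κ : B → ℚ) :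
    ∃ c : B → ℚ, ∑ a, c a • gvec σ p T a = κ := by
  have hspan := (linearIndependent_gvec (σ := σ) (T := T) hp).span_eq_top_of_card_eq_finrank'
    (Module.finrank_fintype_fun_eq_card ℚ).symm
  exact (Submodule.mem_span_range_iff_exists_fun ℚ).1 (hspan ▸ Submodule.mem_top)

end Expansion

section Cone

lemma cone_eq_coe_hull {V : Type*} [AddCommGroup V] [Module ℚ V] (S : Set V) :
    cone S = (PointedCone.hull ℚ S : Set V) := by
  ext x
  rw [SetLike.mem_coe, PointedCone.hull, Submodule.mem_span_set']
  constructor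
  · rintro ⟨n, c, v, hc, hv, rfl⟩
    exact ⟨n, fun i => ⟨c i, hc i⟩, fun i => ⟨v i, hv i⟩, rfl⟩
  · rintro ⟨n, c, v, rfl⟩
    exact ⟨n, fun i => c i, fun i => v i, fun i => (c i).2, fun i => (v i).2, rfl⟩

variable {B : Type*} [DecidableEq B] {σ : Equiv.Perm B} {p : ℕ} {T : Set B} {a b : B}

lemma smul_bsimple_mem_hull (ha : a ∈ T) (c : ℚ) :
    c • bsimple σ p a ∈ PointedCone.hull ℚ (Dgen σ p T) := by
  rcases le_total 0 c with hc | hc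
  · exact PointedCone.smul_mem _ hc (PointedCone.subset_hull (Or.inr ⟨a, ha, Or.inl rfl⟩))
  · rw [← neg_smul_neg]
    exact PointedCone.smul_mem _ (neg_nonneg.2 hc)
      (PointedCone.subset_hull (Or.inr ⟨a, ha, Or.inr rfl⟩))

lemma hvec_mem_hull (ha : a ∉ T) (hb : b ∈ Tscr σ T) (hab : sameOrbit σ a b) :
    hvec σ p a b ∈ PointedCone.hull ℚ (Dgen σ p T) :=
  PointedCone.subset_hull (Or.inl ⟨a, b, ha, hb, hab, rfl⟩)

variable [Finite B]

/-- Subtracting a multiple of `b_{σb}` from `h_a^{σb}` trades `e_{σb}` for `-p e_b`. -/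
lemma neg_add_smul_e_mem_hull (hb : b ∈ tilde σ T) (hbT : b ∉ T) (ha : a ∉ T)
    (hab : sameOrbit σ a b) :
    -(e a + (p : ℚ) ^ (steps σ (σ b) a + 1) • e b) ∈ PointedCone.hull ℚ (Dgen σ p T) := by
  have hsum := add_mem (hvec_mem_hull (p := p) ha (Or.inr ⟨b, ⟨hb, hbT⟩, rfl⟩)
      (hab.trans (sameOrbit_apply σ b)))
    (smul_bsimple_mem_hull (p := p) (apply_mem_of_mem_tilde hb hbT) (-(p : ℚ) ^ steps σ (σ b) a))
  convert hsum using 1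
  rw [hvec, bsimple, pow_succ]
  simp only [Equiv.Perm.coe_inv, Equiv.symm_apply_apply]
  module

lemma gvec_mem_hull (ha : a ∉ T) : gvec σ p T a ∈ PointedCone.hull ℚ (Dgen σ p T) := by
  by_cases hfull : orbit σ a ⊆ tilde σ T
  · have hmem := neg_add_smul_e_mem_hull (p := p) (hfull (sameOrbit_refl σ a)) ha ha
      (sameOrbit_refl σ a)
    have hpos : (0 : ℚ) < 1 + (p : ℚ) ^ (steps σ (σ a) a + 1) := by positivity
    have hscale : e a + (p : ℚ) ^ (steps σ (σ a) a + 1) • e a =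
        (1 + (p : ℚ) ^ (steps σ (σ a) a + 1)) • e a := by module
    convert PointedCone.smul_mem _ (inv_nonneg.2 hpos.le) hmem using 1
    rw [gvec_of_orbit_subset ha hfull, hscale, smul_neg, inv_smul_smul₀ hpos.ne']
  have hexit := isFirstExit_nn hfull
  have hexitT := notMem_of_notMem_tilde hexit.notMem
  have horbit := (sameOrbit_pow_apply σ (nn σ T a) a).symm
  rw [gvec, if_neg ha, if_neg hfull]
  split_ifs with htilde
  · have hsteps : steps σ (σ a) ((σ ^ nn σ T a) a) + 1 = nn σ T a := by
      have hne : nn σ T a ≠ 1 := fun h => hexitT (by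
        simpa [h] using apply_mem_of_mem_tilde htilde ha)
      have hlt : 1 < nn σ T a := lt_of_le_of_ne hexit.pos hne.symm
      have hnext := (hexit.pow_apply hlt).steps_eq
      rw [pow_apply_pow_apply, Nat.sub_add_cancel hexit.pos, pow_one] at hnext
      omega
    have hneg := neg_add_smul_e_mem_hull (p := p) htilde ha hexitT horbit
    rwa [hsteps] at hneg
  · have hh := hvec_mem_hull (p := p) hexitT (Or.inl htilde) horbit
    rwa [hvec, hexit.steps_eq] at hh

lemma D_eq_setOf_LT_nonneg (hp : 1 < p) (σ : Equiv.Perm B) (T : Set B) :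
    D σ p T = {κ | ∀ τ ∉ T, 0 ≤ LT σ p T τ κ} := by
  have := Fintype.ofFinite B
  ext κ
  constructor
  · rintro ⟨n, c, v, hc, hv, rfl⟩ τ hτ
    rw [← coe_LTLin hτ, map_sum]
    refine Finset.sum_nonneg fun i _ => ?_
    rw [map_smul]
    refine mul_nonneg (hc i) ?_
    rcases hv i with ⟨a, b, ha, hb, hab, hvi⟩ | ⟨a, ha, hvi | hvi⟩
    · exact hvi ▸ LTLin_hvec_nonneg hp.le hτ ha hb hab
    · rw [hvi, LTLin_bsimple hτ ha]
    · rw [hvi, map_neg, LTLin_bsimple hτ ha, neg_zero]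
  · intro hκ
    obtain ⟨c, rfl⟩ := exists_eq_sum_gvec hp σ T κ
    rw [D, cone_eq_coe_hull]
    refine Submodule.sum_mem _ fun a _ => ?_
    by_cases ha : a ∈ T
    · rw [gvec, if_pos ha]
      exact smul_bsimple_mem_hull ha (c a)
    · have hpair := hκ a ha
      rw [← coe_LTLin ha, LTLin_sum_gvec c ha] at hpair
      exact PointedCone.smul_mem _ (nonneg_of_mul_nonneg_left hpair (LTLin_gvec_self_pos hp ha))
        (gvec_mem_hull ha)

end Cone

section AdjoinExitPoint

variable {B : Type*} [Finite B] {σ : Equiv.Perm B} {p : ℕ} {T : Set B} {β x τ : B}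

lemma exitPt_exitPt_ne (hβ : β ∉ T) (hne : exitPt σ T β ≠ β) :
    exitPt σ T (exitPt σ T β) ≠ exitPt σ T β := by
  intro hreturn
  have hexit := isFirstExit_mu (not_orbit_subset_of_notMem σ (exitPt_notMem (σ := σ) hβ))
  exact hne (hexit.orbit_diff_subset_singleton hreturn ⟨(sameOrbit_exitPt σ T β).symm, hβ⟩).symm

lemma mu_union_exitPt_pow_apply (hβ : β ∉ T) (hne : exitPt σ T β ≠ β) {i : ℕ}
    (hi : i < mu σ T β) :
    mu σ (T ∪ {exitPt σ T β}) ((σ ^ i) β) = mu σ T ((σ ^ i) β) + mu σ T (exitPt σ T β) := by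
  have hrun := (isFirstExit_mu (not_orbit_subset_of_notMem σ hβ)).pow_apply hi
  have hend : (σ ^ (mu σ T β - i)) ((σ ^ i) β) = exitPt σ T β := by
    rw [pow_apply_pow_apply, Nat.sub_add_cancel hi.le, exitPt]
  have hnext := isFirstExit_mu (not_orbit_subset_of_notMem σ (exitPt_notMem (σ := σ) hβ))
  have hconcat := hrun.concat (hend ▸ hnext) (by rw [hend]; exact exitPt_exitPt_ne hβ hne)
  rw [hend] at hconcat
  rw [hconcat.mu_eq, hrun.mu_eq]

lemma exitPt_ne_exitPt_of_notMem_run (hβ : β ∉ T) (hx : ¬orbit σ x ⊆ T)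
    (hrun : ¬∃ i < mu σ T β, x = (σ ^ i) β) : exitPt σ T x ≠ exitPt σ T β := by
  intro heq
  have hpos := (isFirstExit_mu (not_orbit_subset_of_notMem σ hβ)).pos
  have hxexit := isFirstExit_mu hx
  rcases le_or_gt (mu σ T β) (mu σ T x) with hle | hlt
  · exact hrun ⟨0, hpos, (hxexit.eq_of_pow_apply_eq hβ hle (by omega) heq).2⟩
  · exact hrun ⟨_, Nat.sub_lt hpos hxexit.pos, eq_pow_sub_apply hlt.le heq⟩

lemma orbit_subset_union_exitPt_iff (hβ : β ∉ T) (hne : exitPt σ T β ≠ β) :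
    orbit σ x ⊆ T ∪ {exitPt σ T β} ↔ orbit σ x ⊆ T := by
  refine ⟨fun h y hy => (h hy).resolve_right ?_, fun h => h.trans Set.subset_union_left⟩
  rintro rfl
  exact (h (sameOrbit.trans hy (sameOrbit_exitPt σ T _))).elim (exitPt_notMem (exitPt_notMem hβ))
    (exitPt_exitPt_ne hβ hne)

lemma mu_union_exitPt_of_notMem_run (hβ : β ∉ T) (hx : ¬orbit σ x ⊆ T)
    (hrun : ¬∃ i < mu σ T β, x = (σ ^ i) β) :
    mu σ (T ∪ {exitPt σ T β}) x = mu σ T x :=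
  ((isFirstExit_mu hx).union_singleton (exitPt_ne_exitPt_of_notMem_run hβ hx hrun)).mu_eq

/-- The run of `β` is prolonged by the run of its exit point, which has odd length. -/
lemma epsTf_eq_epsT_union_exitPt [DecidableEq B] (hβ : β ∉ T) (hne : exitPt σ T β ≠ β)
    (htilde : exitPt σ T β ∉ tilde σ T) :
    epsTf σ T β = epsT σ (T ∪ {exitPt σ T β}) := by
  funext x
  by_cases hfull : orbit σ x ⊆ T
  · rw [epsT_of_orbit_subset ((orbit_subset_union_exitPt_iff hβ hne).2 hfull)]
    simp [epsTf, epsT_of_orbit_subset hfull]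
  rw [epsTf, epsT_of_not_orbit_subset hfull,
    epsT_of_not_orbit_subset (mt (orbit_subset_union_exitPt_iff hβ hne).1 hfull)]
  split_ifs with hrun
  · obtain ⟨i, hi, rfl⟩ := hrun
    rw [mu_union_exitPt_pow_apply hβ hne hi, pow_add,
      (odd_mu_of_notMem_tilde htilde).neg_one_pow, mul_neg_one]
  · rw [mu_union_exitPt_of_notMem_run hβ hfull hrun]

lemma notMem_run_of_ne (hβ : β ∉ T) (hτ : τ ∉ T) (hne : τ ≠ β) :
    ¬∃ i < mu σ T β, τ = (σ ^ i) β := by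
  rintro ⟨i, hi, rfl⟩
  have hexit := isFirstExit_mu (not_orbit_subset_of_notMem σ hβ)
  exact hne (hexit.eq_of_pow_apply_eq hτ (Nat.zero_le i) hi rfl).2.symm

lemma mem_tilde_union_exitPt_self_iff (hβ : β ∉ T) (hne : exitPt σ T β ≠ β)
    (htilde : exitPt σ T β ∉ tilde σ T) :
    β ∈ tilde σ (T ∪ {exitPt σ T β}) ↔ β ∉ tilde σ T := by
  have hpos := (isFirstExit_mu (not_orbit_subset_of_notMem σ hβ)).pos
  have hmu : mu σ (T ∪ {exitPt σ T β}) β = mu σ T β + mu σ T (exitPt σ T β) :=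
    mu_union_exitPt_pow_apply hβ hne hpos
  have hodd := Nat.not_even_iff_odd.2 (odd_mu_of_notMem_tilde htilde)
  simp only [mem_tilde_iff, hmu, Nat.even_add, hodd, Set.mem_union, Set.mem_singleton_iff, hβ,
    hne.symm, false_or, iff_false]

lemma exitPt_union_exitPt_self (hβ : β ∉ T) (hne : exitPt σ T β ≠ β) :
    exitPt σ (T ∪ {exitPt σ T β}) β = exitPt σ T (exitPt σ T β) := by
  have hpos := (isFirstExit_mu (not_orbit_subset_of_notMem σ hβ)).pos
  have hmu : mu σ (T ∪ {exitPt σ T β}) β = mu σ T β + mu σ T (exitPt σ T β) :=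
    mu_union_exitPt_pow_apply hβ hne hpos
  rw [exitPt, hmu, add_comm, ← pow_apply_pow_apply]
  rfl

lemma mem_tilde_union_exitPt_iff_of_ne (hβ : β ∉ T) (hτ : τ ∉ T ∪ {exitPt σ T β})
    (hne : τ ≠ β) : τ ∈ tilde σ (T ∪ {exitPt σ T β}) ↔ τ ∈ tilde σ T := by
  have hτT : τ ∉ T := fun h => hτ (Or.inl h)
  rw [mem_tilde_iff, mem_tilde_iff, or_iff_right hτ, or_iff_right hτT,
    mu_union_exitPt_of_notMem_run hβ (not_orbit_subset_of_notMem σ hτT)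
      (notMem_run_of_ne hβ hτT hne)]

lemma epsTf_pow_apply_of_ne [DecidableEq B] (hβ : β ∉ T) (hτ : τ ∉ T) (hne : τ ≠ β) {i : ℕ}
    (hi : i < mu σ T τ) : epsTf σ T β ((σ ^ i) τ) = epsT σ T ((σ ^ i) τ) := by
  refine if_neg ?_
  rintro ⟨j, hj, heq⟩
  exact (isFirstExit_mu (not_orbit_subset_of_notMem σ hτ)).pow_apply_ne_pow_apply
    (isFirstExit_mu (not_orbit_subset_of_notMem σ hβ)) hτ hβ hne hi hj heq

variable [DecidableEq B]

lemma LTf_self_eq_LT (hβ : β ∉ T) (hmu : mu σ T β = nn σ T β) (hne : exitPt σ T β ≠ β)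
    (htilde : exitPt σ T β ∉ tilde σ T) :
    LTf σ p T β β = LT σ p (T ∪ {exitPt σ T β}) β := by
  have hβ' : β ∉ T ∪ {exitPt σ T β} := by simp [hβ, hne.symm]
  have hstart : (σ ^ nn σ T β) β = exitPt σ T β := by rw [exitPt, hmu]
  have hend : (σ ^ mu σ T (exitPt σ T β)) (exitPt σ T β) = exitPt σ (T ∪ {exitPt σ T β}) β :=
    (exitPt_union_exitPt_self hβ hne).symm
  funext κ
  rw [LTf, if_pos rfl, hstart, hend, LT, ← inv_exitPt hβ',
    epsTf_eq_epsT_union_exitPt hβ hne htilde]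
  by_cases h : β ∈ tilde σ T
  · rw [if_pos h, if_neg fun h' => (mem_tilde_union_exitPt_self_iff hβ hne htilde).1 h' h]
    rfl
  · rw [if_neg h, if_pos ((mem_tilde_union_exitPt_self_iff hβ hne htilde).2 h)]

lemma LTf_eq_LT_of_ne (hβ : β ∉ T) (hne : exitPt σ T β ≠ β)
    (htilde : exitPt σ T β ∉ tilde σ T) (hτ : τ ∉ T ∪ {exitPt σ T β}) (hτβ : τ ≠ β) :
    LTf σ p T β τ = LT σ p (T ∪ {exitPt σ T β}) τ := by
  have hτT : τ ∉ T := fun h => hτ (Or.inl h)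
  have hexit := isFirstExit_mu (not_orbit_subset_of_notMem σ hτT)
  funext κ
  rw [LTf, if_neg hτβ, LT, LT, mu_union_exitPt_of_notMem_run hβ
    (not_orbit_subset_of_notMem σ hτT) (notMem_run_of_ne hβ hτT hτβ),
    ← epsTf_eq_epsT_union_exitPt hβ hne htilde]
  simp only [mem_tilde_union_exitPt_iff_of_ne hβ hτ hτβ]
  split_ifs
  · refine Finset.sum_congr rfl fun i hi => ?_
    have hle : i ≤ mu σ T τ - 1 := (Finset.mem_range_succ_iff.1 hi).trans (steps0_le rfl)
    rw [epsTf_pow_apply_of_ne hβ hτT hτβ (hle.trans_lt (Nat.sub_lt hexit.pos one_pos))]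
  · rfl

lemma LTf_eq_LT (hβ : β ∉ T) (hmu : mu σ T β = nn σ T β) (hne : exitPt σ T β ≠ β)
    (htilde : exitPt σ T β ∉ tilde σ T) (hτ : τ ∉ T ∪ {exitPt σ T β}) :
    LTf σ p T β τ = LT σ p (T ∪ {exitPt σ T β}) τ := by
  rcases eq_or_ne τ β with rfl | hτβ
  · exact LTf_self_eq_LT hβ hmu hne htilde
  · exact LTf_eq_LT_of_ne hβ hne htilde hτ hτβ

end AdjoinExitPoint

section OrbitMinusTilde

variable {B : Type*} {σ : Equiv.Perm B} {T : Set B} {β : B}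

lemma not_orbit_subset_tilde_of_mem_BT (hβ : β ∈ BT σ T) : ¬orbit σ β ⊆ tilde σ T :=
  Set.sdiff_nonempty.1 hβ.2.1

variable [Finite B]

lemma mu_eq_nn_of_mem_BT (hβ : β ∈ BT σ T)
    (hempty : {τ : B | ∃ i, 0 < i ∧ i < nn σ T β ∧ τ = (σ ^ i) β} ∩ (tilde σ T \ T) = ∅) :
    mu σ T β = nn σ T β := by
  have hexit := isFirstExit_nn (not_orbit_subset_tilde_of_mem_BT hβ)
  refine IsFirstExit.mu_eq ⟨hexit.pos, notMem_of_notMem_tilde hexit.notMem, fun i hi hin => ?_⟩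
  by_contra hiT
  exact hempty.le ⟨⟨i, hi, hin, rfl⟩, hexit.mem i hi hin, hiT⟩

lemma pow_nn_apply_ne_of_mem_BT (hβ : β ∈ BT σ T) : (σ ^ nn σ T β) β ≠ β := fun hreturn =>
  hβ.2.2 <| (Set.Nonempty.subset_singleton_iff hβ.2.1).1 <|
    (isFirstExit_nn (not_orbit_subset_tilde_of_mem_BT hβ)).orbit_diff_subset_singleton hreturn

end OrbitMinusTilde

end GO

theorem statement17_general {B : Type*} [Finite B] [DecidableEq B]
    (σ : Equiv.Perm B) (p : ℕ) (hp : 1 < p) (T : Set B) (β : B)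
    (hβ : β ∈ GO.BT σ T)
    (hempty : {τ : B | ∃ i, 0 < i ∧ i < GO.nn σ T β ∧ τ = (σ ^ i) β}
        ∩ (GO.tilde σ T \ T) = ∅) :
    (∀ τ, τ ∉ T ∪ {(σ ^ GO.nn σ T β) β} →
      ∀ κ : B → ℚ, GO.LTf σ p T β τ κ = GO.LT σ p (T ∪ {(σ ^ GO.nn σ T β) β}) τ κ) ∧
    GO.Df σ p T β = GO.D σ p (T ∪ {(σ ^ GO.nn σ T β) β}) := by
  have hmu := GO.mu_eq_nn_of_mem_BT hβ hempty
  have hexitPt : (σ ^ GO.nn σ T β) β = GO.exitPt σ T β := by rw [GO.exitPt, hmu]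
  have hne := GO.pow_nn_apply_ne_of_mem_BT hβ
  have htilde := (GO.isFirstExit_nn (GO.not_orbit_subset_tilde_of_mem_BT hβ)).notMem
  rw [GO.Df, GO.D_eq_setOf_LT_nonneg hp]
  rw [hexitPt] at hne htilde ⊢
  have hLTf : ∀ τ, τ ∉ T ∪ {GO.exitPt σ T β} →
      ∀ κ, GO.LTf σ p T β τ κ = GO.LT σ p (T ∪ {GO.exitPt σ T β}) τ κ :=
    fun τ hτ => congr_fun (GO.LTf_eq_LT hβ.1 hmu hne htilde hτ)
  refine ⟨hLTf, Set.ext fun κ => forall_congr' fun τ => ?_⟩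
  rw [← and_imp, ← not_or]
  exact forall_congr' fun hτ => by rw [hLTf τ hτ κ]

/-- let `β ∈ 𝔹(T)` with `{σ^iβ : 0 < i < n_β} ∩ (T̃ − T) = ∅`, and set
`T⁺ = T ∪ {σ^{n_β}β}`.  Then `L_{T,f_β,τ} = L_{T⁺,τ}` for every `τ ∈ 𝔹 − T⁺`, and
consequently `𝒟_{T,f_β} = 𝒟_{T⁺}`. -/
theorem statement17 {B : Type*} [Fintype B] [DecidableEq B] [Nonempty B]
    (σ : Equiv.Perm B) (p : ℕ) (hp : p.Prime) (T : Set B) (β : B)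
    (hβ : β ∈ GO.BT σ T)
    (hempty : {τ : B | ∃ i, 0 < i ∧ i < GO.nn σ T β ∧ τ = (σ ^ i) β}
        ∩ (GO.tilde σ T \ T) = ∅) :
    (∀ τ, τ ∉ T ∪ {(σ ^ GO.nn σ T β) β} →
      ∀ κ : B → ℚ, GO.LTf σ p T β τ κ = GO.LT σ p (T ∪ {(σ ^ GO.nn σ T β) β}) τ κ) ∧
    GO.Df σ p T β = GO.D σ p (T ∪ {(σ ^ GO.nn σ T β) β}) :=
  statement17_general σ p hp.one_lt T β hβ hempty
end
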